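/- arXiv:math/0406242 — 3 statements merged into one kernel-verified Lean document; each statement's English description precedes it below -/
import Mathlib

section
/- Fix m ≥ 1, a nonconstant cyclic word Ω : ℤ/mℤ → Bool, and the associated angles x_i, y_i, z_i and closed polytope P̄. Suppose w ∈ P̄ maximizes the total volume V over P̄ (i.e., V(w') ≤ V(w) for all w' ∈ P̄). Then for every i ∈ ℤ/mℤ, if at least one of x_i, y_i, z_i equals 0, then at least two of x_i, y_i, z_i equal 0 and the remaining one equals π. (There are no simple degeneracies at a volume maximizer, only double degeneracies.) -/
open Real

/-- `i` is a hinge index iff the letters (`false` = `L`, `true` = `R`) just before and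
just after layer `i` differ. -/
def IsHinge {m : ℕ} (Ω : ZMod m → Bool) (i : ZMod m) : Prop := Ω (i - 1) ≠ Ω i

/-- The dihedral angle `x_i` of layer `i`, determined by the parameters `w` and the
letters of the cyclic word `Ω` (`false` = `L`, `true` = `R`). -/
noncomputable def xAng {m : ℕ} (Ω : ZMod m → Bool) (w : ZMod m → ℝ) (i : ZMod m) : ℝ :=
  if Ω (i - 1) = Ω i then
    if Ω i = false then w (i - 1) + w (i + 1) else -w (i - 1) + 2 * w i - w (i + 1)
  else
    if Ω (i - 1) = false then w (i - 1) + w i - w (i + 1)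
    else -w (i - 1) + w i + w (i + 1)

/-- The dihedral angle `y_i` of layer `i`. -/
noncomputable def yAng {m : ℕ} (Ω : ZMod m → Bool) (w : ZMod m → ℝ) (i : ZMod m) : ℝ :=
  if Ω (i - 1) = Ω i then
    if Ω i = false then -w (i - 1) + 2 * w i - w (i + 1) else w (i - 1) + w (i + 1)
  else
    if Ω (i - 1) = false then -w (i - 1) + w i + w (i + 1)
    else w (i - 1) + w i - w (i + 1)

/-- The dihedral angle `z_i := π − 2 w i` of layer `i`. -/
noncomputable def zAng {m : ℕ} (w : ZMod m → ℝ) (i : ZMod m) : ℝ := π - 2 * w i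

/-- The closed polytope `P̄` of weak angle structures: range, concavity and hinge
conditions with weak inequalities. -/
def Pbar (m : ℕ) (Ω : ZMod m → Bool) : Set (ZMod m → ℝ) :=
  {w | (∀ i, 0 ≤ w i ∧ w i ≤ π / 2) ∧
       (∀ i, ¬IsHinge Ω i → w (i - 1) + w (i + 1) ≤ 2 * w i) ∧
       (∀ i, IsHinge Ω i → |w (i + 1) - w (i - 1)| ≤ w i)}

/-- The Lobachevsky-type integral `∫₀ˣ log(2 sin u) du`. -/
noncomputable def lob (x : ℝ) : ℝ := ∫ u in (0:ℝ)..x, Real.log (2 * Real.sin u)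

/-- The volume `𝒱(x,y,z)` of the ideal tetrahedron with dihedral angles `x, y, z`. -/
noncomputable def idealVol (x y z : ℝ) : ℝ := -lob x - lob y - lob z

/-- The total volume functional `V(w) = Σᵢ 𝒱(xᵢ, yᵢ, zᵢ)`. -/
noncomputable def totalVol (m : ℕ) [NeZero m] (Ω : ZMod m → Bool) (w : ZMod m → ℝ) : ℝ :=
  ∑ i : ZMod m, idealVol (xAng Ω w i) (yAng Ω w i) (zAng w i)

/-!
Move from the maximizer `w` towards a point `w'` of `P̄` all of whose angles are positive. As
`t → 0⁺`, `lob (x + t (x' - x)) = lob x + c t log t + O(t)`, where `c = x' - x` if `x` is `0` or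
`π`, and `c = 0` otherwise. A layer with an angle `π` has angles `0, 0, π`, and its three
coefficients cancel because both angle triples sum to `π`; any other layer contributes the sum of
the positive numbers `x'` over its vanishing angles. A layer with a vanishing angle but no angle `π`
thus makes the total coefficient positive, and as `log t → -∞` the volume would strictly increase
along the segment.
-/

open AffineMap Asymptotics Filter Set Topology

/-! ### Expansions `f t = f 0 + c t log t + O(t)` -/

/-- `f t = f 0 + c * (t * log t) + O(t)` as `t → 0⁺`: unless `c = 0`, the one-sided difference
quotient of `f` at `0` diverges like `c * log t`. -/
def HasLogSlope (f : ℝ → ℝ) (c : ℝ) : Prop :=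
  (fun t => f t - f 0 - c * (t * log t)) =O[𝓝[>] 0] fun t => t

theorem hasLogSlope_zero_of_hasDerivAt {f : ℝ → ℝ} {f' : ℝ} (hf : HasDerivAt f f' 0) :
    HasLogSlope f 0 := by
  simpa [HasLogSlope] using hf.isBigO_sub.mono nhdsWithin_le_nhds

namespace HasLogSlope

variable {f : ℝ → ℝ} {c : ℝ}

theorem const_sub (hf : HasLogSlope f c) (b : ℝ) : HasLogSlope (fun t => b - f t) (-c) :=
  hf.neg_left.congr_left fun t => by ring

theorem sum {ι : Type*} {s : Finset ι} {F : ι → ℝ → ℝ} {C : ι → ℝ}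
    (hF : ∀ i ∈ s, HasLogSlope (F i) (C i)) :
    HasLogSlope (fun t => ∑ i ∈ s, F i t) (∑ i ∈ s, C i) :=
  (IsBigO.fun_sum hF).congr_left fun t => by
    simp only [Finset.sum_sub_distrib, Finset.sum_mul]

theorem comp_mul_left (hf : HasLogSlope f c) {a : ℝ} (ha : 0 ≤ a) :
    HasLogSlope (fun t => f (a * t)) (c * a) := by
  rcases ha.eq_or_lt with rfl | ha
  · simpa [HasLogSlope] using isBigO_zero _ _
  have ha_tendsto : Tendsto (fun t : ℝ => a * t) (𝓝[>] 0) (𝓝[>] 0) := by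
    refine tendsto_nhdsWithin_iff.2 ⟨?_, ?_⟩
    · exact (Continuous.tendsto' (by fun_prop) 0 0 (mul_zero a)).mono_left nhdsWithin_le_nhds
    · filter_upwards [self_mem_nhdsWithin] with t ht using mul_pos ha ht
  have hscaled : (fun t => f (a * t) - f 0 - c * (a * t * log (a * t))) =O[𝓝[>] 0] fun t => t :=
    (hf.comp_tendsto ha_tendsto).trans (isBigO_const_mul_self a _ _)
  have hlog_a : (fun t => c * a * log a * t) =O[𝓝[>] 0] fun t => t := isBigO_const_mul_self _ _ _
  refine (hscaled.add hlog_a).congr' ?_ EventuallyEq.rfl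
  filter_upwards [self_mem_nhdsWithin] with t ht
  rw [log_mul ha.ne' (ne_of_gt ht), mul_zero]
  ring

theorem eventually_lt (hf : HasLogSlope f c) (hc : 0 < c) : ∀ᶠ t in 𝓝[>] 0, f t < f 0 := by
  obtain ⟨C, hC⟩ := hf.bound
  have hlog : ∀ᶠ t in 𝓝[>] 0, c * log t < -C :=
    (tendsto_log_nhdsGT_zero.const_mul_atBot hc).eventually_lt_atBot _
  filter_upwards [hC, hlog, self_mem_nhdsWithin] with t hbound hlog_t ht
  rw [norm_of_nonneg (le_of_lt ht)] at hbound
  have hslope : c * log t * t < -C * t := mul_lt_mul_of_pos_right hlog_t ht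
  linarith [(le_abs_self _).trans hbound]

end HasLogSlope

/-! ### The function `lob` -/

theorem intervalIntegrable_log_two_mul_sin (a b : ℝ) :
    IntervalIntegrable (fun u => log (2 * sin u)) MeasureTheory.volume a b := by
  have hanalytic : AnalyticOnNhd ℝ (fun u => 2 * sin u) (uIcc a b) := fun _ _ =>
    analyticAt_const.mul analyticAt_sin
  exact hanalytic.meromorphicOn.intervalIntegrable_log

theorem hasDerivAt_lob {x : ℝ} (hx : x ∈ Ioo 0 π) : HasDerivAt lob (log (2 * sin x)) x := by
  have hsin : 0 < sin x := sin_pos_of_mem_Ioo hx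
  refine intervalIntegral.integral_hasDerivAt_right (intervalIntegrable_log_two_mul_sin 0 x) ?_ ?_
  · exact Measurable.stronglyMeasurable (by fun_prop) |>.stronglyMeasurableAtFilter
  · exact ContinuousAt.log (by fun_prop) (by positivity)

theorem lob_pi_sub (x : ℝ) : lob (π - x) = lob π - lob x := by
  have hreflect : lob x = ∫ u in (π - x)..π, log (2 * sin u) := by
    simpa [lob] using
      intervalIntegral.integral_comp_sub_left (a := 0) (b := x) (fun u => log (2 * sin u)) π
  rw [hreflect, eq_sub_iff_add_eq]
  exact intervalIntegral.integral_add_adjacent_intervals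
    (intervalIntegrable_log_two_mul_sin _ _) (intervalIntegrable_log_two_mul_sin _ _)

theorem abs_log_two_mul_sin_sub_log_le {u : ℝ} (hu : 0 < u) (hu' : u ≤ π / 2) :
    |log (2 * sin u) - log u| ≤ log 2 := by
  have hlower : u ≤ 2 * sin u := by
    have hhalf : 1 / 2 ≤ 2 / π := by
      rw [div_le_div_iff₀ two_pos pi_pos]
      linarith [pi_le_four]
    linarith [mul_le_mul_of_nonneg_right hhalf hu.le, mul_le_sin hu.le hu']
  have hupper : 2 * sin u ≤ 2 * u := by linarith [sin_le hu.le]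
  have hlog_lower : log u ≤ log (2 * sin u) := log_le_log hu hlower
  have hlog_upper : log (2 * sin u) ≤ log 2 + log u :=
    (log_le_log (hu.trans_le hlower) hupper).trans_eq (log_mul two_ne_zero hu.ne')
  rw [abs_of_nonneg] <;> linarith

theorem abs_lob_sub_integral_log_le {x : ℝ} (hx : 0 ≤ x) (hx' : x ≤ π / 2) :
    |lob x - (x * log x - x)| ≤ log 2 * x := by
  have hlog : ∫ u in (0 : ℝ)..x, log u = x * log x - x := by simp [integral_log]
  rw [← hlog, lob, ← intervalIntegral.integral_sub (intervalIntegrable_log_two_mul_sin 0 x)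
    intervalIntegral.intervalIntegrable_log']
  calc |∫ u in (0 : ℝ)..x, (log (2 * sin u) - log u)| ≤ log 2 * |x - 0| := by
        refine intervalIntegral.norm_integral_le_of_norm_le_const (E := ℝ) fun u hu => ?_
        rw [uIoc_of_le hx] at hu
        exact abs_log_two_mul_sin_sub_log_le hu.1 (hu.2.trans hx')
    _ = log 2 * x := by rw [sub_zero, abs_of_nonneg hx]

theorem hasLogSlope_lob : HasLogSlope lob 1 := by
  refine IsBigO.of_bound (log 2 + 1) ?_
  filter_upwards [Ioo_mem_nhdsGT pi_div_two_pos] with t ht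
  have hbound := abs_le.1 (abs_lob_sub_integral_log_le ht.1.le ht.2.le)
  have hlob_zero : lob 0 = 0 := intervalIntegral.integral_same
  rw [hlob_zero, norm_of_nonneg ht.1.le, norm_eq_abs, abs_le]
  constructor <;> linarith [ht.1]

/-- The coefficient of `t * log t` in the expansion of `lob` along the segment from `x` to `x'` in
`[0, π]`: it vanishes unless `x` is one of the singularities `0` and `π` of `log (2 * sin u)`. -/
noncomputable def lobLogSlope (x x' : ℝ) : ℝ := if x = 0 ∨ x = π then x' - x else 0

theorem hasLogSlope_lob_lineMap {x x' : ℝ} (hx : x ∈ Icc 0 π) (hx' : x' ∈ Icc 0 π) :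
    HasLogSlope (fun t => lob (lineMap x x' t)) (lobLogSlope x x') := by
  by_cases hzero : x = 0
  · subst hzero
    simpa [lobLogSlope, lineMap_apply_ring', mul_comm] using hasLogSlope_lob.comp_mul_left hx'.1
  by_cases hpi : x = π
  · subst hpi
    have hreflect : (fun t => lob (lineMap π x' t)) = fun t => lob π - lob ((π - x') * t) := by
      funext t
      rw [← lob_pi_sub, lineMap_apply_ring']
      ring_nf
    simpa [hreflect, lobLogSlope] using
      (hasLogSlope_lob.comp_mul_left (sub_nonneg.2 hx'.2)).const_sub (lob π)
  · have hinterior : x ∈ Ioo 0 π := ⟨hx.1.lt_of_ne' hzero, hx.2.lt_of_ne hpi⟩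
    have hlob : HasDerivAt lob (log (2 * sin x)) (lineMap x x' (0 : ℝ)) := by
      simpa using hasDerivAt_lob hinterior
    simpa [lobLogSlope, hzero, hpi, Function.comp_def] using
      hasLogSlope_zero_of_hasDerivAt (hlob.comp (0 : ℝ) hasDerivAt_lineMap)

/-! ### Angle vectors -/

/-- Possibly degenerate angles with sum `π`, such as the dihedral angles at one vertex of an ideal
tetrahedron. -/
structure IsAngleVector {κ : Type*} [Fintype κ] (θ : κ → ℝ) : Prop where
  nonneg : ∀ k, 0 ≤ θ k
  sum_eq_pi : ∑ k, θ k = π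

namespace IsAngleVector

variable {κ : Type*} [Fintype κ] {θ θ' : κ → ℝ}

theorem mem_Icc (hθ : IsAngleVector θ) (k : κ) : θ k ∈ Icc 0 π :=
  ⟨hθ.nonneg k, hθ.sum_eq_pi ▸
    Finset.single_le_sum (fun l _ => hθ.nonneg l) (Finset.mem_univ k)⟩

theorem eq_zero_of_eq_pi (hθ : IsAngleVector θ) {k l : κ} (hk : θ k = π) (hlk : l ≠ k) :
    θ l = 0 := by
  classical
  have hpair : θ l + θ k ≤ π := by
    rw [← hθ.sum_eq_pi, ← Finset.sum_pair hlk]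
    exact Finset.sum_le_univ_sum_of_nonneg hθ.nonneg
  linarith [hθ.nonneg l]

theorem sum_lobLogSlope_eq_zero (hθ : IsAngleVector θ) (hθ' : IsAngleVector θ') {k : κ}
    (hk : θ k = π) : ∑ l, lobLogSlope (θ l) (θ' l) = 0 := by
  have hslope (l : κ) : lobLogSlope (θ l) (θ' l) = θ' l - θ l := by
    refine if_pos ?_
    by_cases hlk : l = k
    · exact .inr (hlk ▸ hk)
    · exact .inl (hθ.eq_zero_of_eq_pi hk hlk)
  simp only [hslope, Finset.sum_sub_distrib, hθ.sum_eq_pi, hθ'.sum_eq_pi, sub_self]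

end IsAngleVector

theorem lobLogSlope_nonneg_of_ne_pi {x x' : ℝ} (hx : x ≠ π) (hx' : 0 ≤ x') :
    0 ≤ lobLogSlope x x' := by
  unfold lobLogSlope
  split_ifs with hdegenerate
  · simpa [hdegenerate.resolve_right hx] using hx'
  · exact le_rfl

theorem IsAngleVector.sum_lobLogSlope_nonneg {κ : Type*} [Fintype κ] {θ θ' : κ → ℝ}
    (hθ : IsAngleVector θ) (hθ' : IsAngleVector θ') : 0 ≤ ∑ k, lobLogSlope (θ k) (θ' k) := by
  by_cases hpi : ∃ k, θ k = π
  · obtain ⟨k, hk⟩ := hpi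
    exact (hθ.sum_lobLogSlope_eq_zero hθ' hk).ge
  · push Not at hpi
    exact Finset.sum_nonneg fun k _ => lobLogSlope_nonneg_of_ne_pi (hpi k) (hθ'.nonneg k)

theorem sum_lobLogSlope_pos {κ : Type*} [Fintype κ] {θ θ' : κ → ℝ} (hpi : ∀ k, θ k ≠ π)
    (hθ' : ∀ k, 0 < θ' k) {k : κ} (hk : θ k = 0) : 0 < ∑ l, lobLogSlope (θ l) (θ' l) := by
  refine Finset.sum_pos' (fun l _ => lobLogSlope_nonneg_of_ne_pi (hpi l) (hθ' l).le)
    ⟨k, Finset.mem_univ k, ?_⟩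
  simpa [lobLogSlope, hk] using hθ' k

theorem eventually_sum_lob_lineMap_lt {ι κ : Type*} [Fintype ι] [Fintype κ] {θ θ' : ι → κ → ℝ}
    (hθ : ∀ i, IsAngleVector (θ i)) (hθ' : ∀ i, IsAngleVector (θ' i)) {i : ι} {k : κ}
    (hpos : ∀ l, 0 < θ' i l) (hpi : ∀ l, θ i l ≠ π) (hk : θ i k = 0) :
    ∀ᶠ t in 𝓝[>] (0 : ℝ),
      ∑ j, ∑ l, lob (lineMap (θ j l) (θ' j l) t) < ∑ j, ∑ l, lob (θ j l) := by
  have hslope : HasLogSlope (fun t => ∑ j, ∑ l, lob (lineMap (θ j l) (θ' j l) t))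
      (∑ j, ∑ l, lobLogSlope (θ j l) (θ' j l)) :=
    .sum fun j _ => .sum fun l _ => hasLogSlope_lob_lineMap ((hθ j).mem_Icc l) ((hθ' j).mem_Icc l)
  have hslope_pos : 0 < ∑ j, ∑ l, lobLogSlope (θ j l) (θ' j l) :=
    Finset.sum_pos' (fun j _ => (hθ j).sum_lobLogSlope_nonneg (hθ' j))
      ⟨i, Finset.mem_univ i, sum_lobLogSlope_pos hpi hpos hk⟩
  simpa using hslope.eventually_lt hslope_pos

/-! ### The angles of a layer -/

/-- The angles `x_i, y_i, z_i` of layer `i`, in this order. -/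
noncomputable def layerAngle {m : ℕ} (Ω : ZMod m → Bool) (w : ZMod m → ℝ) (i : ZMod m) :
    Fin 3 → ℝ :=
  ![xAng Ω w i, yAng Ω w i, zAng w i]

section Layer

variable {m : ℕ} {Ω : ZMod m → Bool} {w : ZMod m → ℝ}

theorem sum_layerAngle (Ω : ZMod m → Bool) (w : ZMod m → ℝ) (i : ZMod m) :
    ∑ k, layerAngle Ω w i k = π := by
  simp only [layerAngle, Fin.sum_univ_three, Matrix.cons_val, xAng, yAng, zAng]
  split_ifs <;> ring

theorem layerAngle_lineMap (Ω : ZMod m → Bool) (w w' : ZMod m → ℝ) (t : ℝ) (i : ZMod m)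
    (k : Fin 3) : layerAngle Ω (lineMap w w' t) i k =
      lineMap (layerAngle Ω w i k) (layerAngle Ω w' i k) t := by
  fin_cases k
  · change xAng Ω (lineMap w w' t) i = lineMap (xAng Ω w i) (xAng Ω w' i) t
    simp only [xAng, pi_lineMap_apply, lineMap_apply_ring']
    split_ifs <;> ring
  · change yAng Ω (lineMap w w' t) i = lineMap (yAng Ω w i) (yAng Ω w' i) t
    simp only [yAng, pi_lineMap_apply, lineMap_apply_ring']
    split_ifs <;> ring
  · change zAng (lineMap w w' t) i = lineMap (zAng w i) (zAng w' i) t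
    simp only [zAng, pi_lineMap_apply, lineMap_apply_ring']
    ring

theorem totalVol_eq_neg_sum_lob [NeZero m] (Ω : ZMod m → Bool) (w : ZMod m → ℝ) :
    totalVol m Ω w = -∑ i, ∑ k, lob (layerAngle Ω w i k) := by
  simp only [totalVol, idealVol, layerAngle, Fin.sum_univ_three, Matrix.cons_val,
    ← Finset.sum_neg_distrib]
  exact Finset.sum_congr rfl fun i _ => by ring

theorem forall_layerAngle_iff_of_not_isHinge {p : ℝ → Prop} {i : ZMod m} (hi : ¬IsHinge Ω i) :
    (∀ k, p (layerAngle Ω w i k)) ↔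
      p (w (i - 1) + w (i + 1)) ∧ p (2 * w i - (w (i - 1) + w (i + 1))) ∧ p (π - 2 * w i) := by
  have hsame : Ω (i - 1) = Ω i := not_not.1 hi
  have hdiff : -w (i - 1) + 2 * w i - w (i + 1) = 2 * w i - (w (i - 1) + w (i + 1)) := by ring
  cases hletter : Ω i <;>
    simp [Fin.forall_fin_succ, layerAngle, xAng, yAng, zAng, hsame, hletter, hdiff, and_left_comm]

theorem forall_layerAngle_iff_of_isHinge {p : ℝ → Prop} {i : ZMod m} (hi : IsHinge Ω i) :
    (∀ k, p (layerAngle Ω w i k)) ↔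
      p (w i - (w (i + 1) - w (i - 1))) ∧ p (w i + (w (i + 1) - w (i - 1))) ∧
        p (π - 2 * w i) := by
  have hdiff : w (i - 1) + w i - w (i + 1) = w i - (w (i + 1) - w (i - 1)) := by ring
  have hsum : -w (i - 1) + w i + w (i + 1) = w i + (w (i + 1) - w (i - 1)) := by ring
  cases hletter : Ω (i - 1) <;>
    simp [Fin.forall_fin_succ, layerAngle, xAng, yAng, zAng, hletter ▸ hi.symm, hletter, hdiff,
      hsum, and_left_comm]

theorem mem_Pbar_iff_layerAngle_nonneg : w ∈ Pbar m Ω ↔ ∀ i k, 0 ≤ layerAngle Ω w i k := by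
  refine ⟨fun ⟨hrange, hconcave, hhinge⟩ i => ?_,
    fun hangle => ⟨fun i => ?_, fun i hi => ?_, fun i hi => ?_⟩⟩
  · have hcur := hrange i
    by_cases hi : IsHinge Ω i
    · have hhinge_i := abs_le.1 (hhinge i hi)
      exact (forall_layerAngle_iff_of_isHinge hi).2 ⟨by linarith, by linarith, by linarith⟩
    · have hconcave_i := hconcave i hi
      have hprev := hrange (i - 1)
      have hnext := hrange (i + 1)
      exact (forall_layerAngle_iff_of_not_isHinge hi).2 ⟨by linarith, by linarith, by linarith⟩
  · by_cases hi : IsHinge Ω i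
    · obtain ⟨hx, hy, hz⟩ := (forall_layerAngle_iff_of_isHinge hi).1 (hangle i)
      constructor <;> linarith
    · obtain ⟨hx, hy, hz⟩ := (forall_layerAngle_iff_of_not_isHinge hi).1 (hangle i)
      constructor <;> linarith
  · linarith [((forall_layerAngle_iff_of_not_isHinge hi).1 (hangle i)).2.1]
  · obtain ⟨hx, hy, -⟩ := (forall_layerAngle_iff_of_isHinge hi).1 (hangle i)
    rw [abs_le]
    constructor <;> linarith

theorem isAngleVector_layerAngle (hw : w ∈ Pbar m Ω) (i : ZMod m) :
    IsAngleVector (layerAngle Ω w i) where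
  nonneg := mem_Pbar_iff_layerAngle_nonneg.1 hw i
  sum_eq_pi := sum_layerAngle Ω w i

theorem convex_Pbar (m : ℕ) (Ω : ZMod m → Bool) : Convex ℝ (Pbar m Ω) := by
  refine convex_iff_segment_subset.2 fun w hw w' hw' => ?_
  rw [segment_eq_image_lineMap]
  rintro _ ⟨t, ht, rfl⟩
  rw [mem_Pbar_iff_layerAngle_nonneg] at hw hw' ⊢
  intro i k
  rw [layerAngle_lineMap]
  exact (convex_Ici (0 : ℝ)).lineMap_mem (hw i k) (hw' i k) ht

theorem eventually_totalVol_lt_totalVol_lineMap [NeZero m] {w' : ZMod m → ℝ} (hw : w ∈ Pbar m Ω)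
    (hw' : w' ∈ Pbar m Ω) {i : ZMod m} {k : Fin 3} (hpos : ∀ l, 0 < layerAngle Ω w' i l)
    (hpi : ∀ l, layerAngle Ω w i l ≠ π) (hk : layerAngle Ω w i k = 0) :
    ∀ᶠ t in 𝓝[>] (0 : ℝ), totalVol m Ω w < totalVol m Ω (lineMap w w' t) := by
  simpa only [totalVol_eq_neg_sum_lob, layerAngle_lineMap, neg_lt_neg_iff] using
    eventually_sum_lob_lineMap_lt (isAngleVector_layerAngle hw) (isAngleVector_layerAngle hw')
      hpos hpi hk

end Layer

/-! ### A point with positive angles -/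

/-- The concave parabola `s ↦ s (1 - s)`, read around the cycle `ℤ/mℤ` with `s = a / m`. It is
strictly concave except at `0`, where the two ends of the parabola meet. -/
noncomputable def cyclicParabola {m : ℕ} (a : ZMod m) : ℝ := (a.val / m) * (1 - a.val / m)

section PositiveAngles

variable {m : ℕ}

theorem cyclicParabola_mem_Ico [NeZero m] (a : ZMod m) : cyclicParabola a ∈ Ico 0 1 := by
  have hm : (0 : ℝ) < m := Nat.cast_pos.2 (NeZero.pos m)
  have hnonneg : 0 ≤ (a.val / m : ℝ) := by positivity
  have hlt_one : (a.val / m : ℝ) < 1 := (div_lt_one hm).2 (Nat.cast_lt.2 a.val_lt)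
  unfold cyclicParabola
  constructor <;> nlinarith

theorem cyclicParabola_natCast {n : ℕ} (hn : n ≤ m) :
    cyclicParabola (n : ZMod m) = (n / m) * (1 - n / m) := by
  rcases hn.eq_or_lt with rfl | hn
  · rcases eq_or_ne n 0 with rfl | hn_ne <;> simp [cyclicParabola, *]
  · rw [cyclicParabola, ZMod.val_cast_of_lt hn]

theorem cyclicParabola_strictly_concave [NeZero m] {a : ZMod m} (ha : a ≠ 0) :
    cyclicParabola (a - 1) + cyclicParabola (a + 1) < 2 * cyclicParabola a := by
  have hm : (0 : ℝ) < m := Nat.cast_pos.2 (NeZero.pos m)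
  obtain ⟨n, hn⟩ : ∃ n, a.val = n + 1 := Nat.exists_eq_succ_of_ne_zero ((ZMod.val_ne_zero a).2 ha)
  have hnm : n + 1 < m := hn ▸ a.val_lt
  obtain rfl : ((n + 1 : ℕ) : ZMod m) = a := by
    rw [← hn, ZMod.natCast_zmod_val]
  have hprev : ((n + 1 : ℕ) : ZMod m) - 1 = (n : ℕ) := by push_cast; ring
  have hnext : ((n + 1 : ℕ) : ZMod m) + 1 = (n + 2 : ℕ) := by push_cast; ring
  rw [hprev, hnext, cyclicParabola_natCast (by lia), cyclicParabola_natCast (by lia),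
    cyclicParabola_natCast (by lia)]
  push_cast
  field_simp
  linarith

theorem exists_isHinge [NeZero m] {Ω : ZMod m → Bool} (hΩ : ∃ i j, Ω i ≠ Ω j) :
    ∃ i, IsHinge Ω i := by
  by_contra! hnone
  have hperiodic : Function.Periodic Ω 1 := fun i => by
    simpa [IsHinge, eq_comm] using hnone (i + 1)
  have hconst (i : ZMod m) : Ω i = Ω 0 := by simpa using hperiodic.nat_mul_eq i.val
  obtain ⟨i, j, hij⟩ := hΩ
  exact hij ((hconst i).trans (hconst j).symm)

theorem layerAngle_pos {Ω : ZMod m → Bool} {w : ZMod m → ℝ} (hrange : ∀ i, w i ∈ Ioo 0 (π / 2))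
    (hconcave : ∀ i, ¬IsHinge Ω i → w (i - 1) + w (i + 1) < 2 * w i)
    (hhinge : ∀ i, IsHinge Ω i → |w (i + 1) - w (i - 1)| < w i) (i : ZMod m) (k : Fin 3) :
    0 < layerAngle Ω w i k := by
  have hcur_lt := (hrange i).2
  revert k
  by_cases hi : IsHinge Ω i
  · have hhinge_i := abs_lt.1 (hhinge i hi)
    exact (forall_layerAngle_iff_of_isHinge hi).2 ⟨by linarith, by linarith, by linarith⟩
  · have hconcave_i := hconcave i hi
    have hneighbors := add_pos (hrange (i - 1)).1 (hrange (i + 1)).1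
    exact (forall_layerAngle_iff_of_not_isHinge hi).2 ⟨hneighbors, by linarith, by linarith⟩

theorem exists_layerAngle_pos [NeZero m] {Ω : ZMod m → Bool} (hΩ : ∃ i j, Ω i ≠ Ω j) :
    ∃ w, ∀ i k, 0 < layerAngle Ω w i k := by
  obtain ⟨j, hj⟩ := exists_isHinge hΩ
  have hP (i : ZMod m) := cyclicParabola_mem_Ico (i - j)
  refine ⟨fun i => π / 4 * (1 + cyclicParabola (i - j)), layerAngle_pos ?_ ?_ ?_⟩
  · intro i
    constructor <;> nlinarith [pi_pos, (hP i).1, (hP i).2]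
  · intro i hi
    have hij : i - j ≠ 0 := sub_ne_zero.2 fun h => hi (h ▸ hj)
    have hconcave := cyclicParabola_strictly_concave hij
    rw [sub_right_comm, sub_add_eq_add_sub] at hconcave
    nlinarith [pi_pos]
  · intro i _
    rw [abs_lt]
    constructor <;>
      nlinarith [pi_pos, (hP i).1, (hP (i - 1)).1, (hP (i - 1)).2, (hP (i + 1)).1, (hP (i + 1)).2]

end PositiveAngles

theorem exists_layerAngle_eq_pi_of_isMaxOn {m : ℕ} [NeZero m] {Ω : ZMod m → Bool}
    (hΩ : ∃ i j, Ω i ≠ Ω j) {w : ZMod m → ℝ} (hw : w ∈ Pbar m Ω)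
    (hmax : IsMaxOn (totalVol m Ω) (Pbar m Ω) w) {i : ZMod m} {k : Fin 3}
    (hk : layerAngle Ω w i k = 0) : ∃ l, layerAngle Ω w i l = π := by
  by_contra! hpi
  obtain ⟨w', hpos⟩ := exists_layerAngle_pos hΩ
  have hw' : w' ∈ Pbar m Ω := mem_Pbar_iff_layerAngle_nonneg.2 fun j l => (hpos j l).le
  obtain ⟨t, hincrease, ht⟩ :=
    ((eventually_totalVol_lt_totalVol_lineMap hw hw' (hpos i) hpi hk).and
      (Ioo_mem_nhdsGT one_pos)).exists
  exact hincrease.not_ge (hmax ((convex_Pbar m Ω).lineMap_mem hw hw' (Ioo_subset_Icc_self ht)))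

/-- At a maximizer of the total volume over `P̄`, there are no simple degeneracies:
if one of the angles of a layer vanishes, then two of them vanish and the third is `π`. -/
theorem no_simple_degeneracy_at_maximizer (m : ℕ) [NeZero m] (Ω : ZMod m → Bool)
    (hΩ : ∃ i j, Ω i ≠ Ω j)
    (w : ZMod m → ℝ) (hw : w ∈ Pbar m Ω)
    (hmax : ∀ w' ∈ Pbar m Ω, totalVol m Ω w' ≤ totalVol m Ω w) :
    ∀ i, (xAng Ω w i = 0 ∨ yAng Ω w i = 0 ∨ zAng w i = 0) →
      (xAng Ω w i = 0 ∧ yAng Ω w i = 0 ∧ zAng w i = π) ∨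
      (xAng Ω w i = 0 ∧ zAng w i = 0 ∧ yAng Ω w i = π) ∨
      (yAng Ω w i = 0 ∧ zAng w i = 0 ∧ xAng Ω w i = π) := by
  intro i hdegenerate
  obtain ⟨k, hk⟩ : ∃ k, layerAngle Ω w i k = 0 := by
    simpa [Fin.exists_fin_succ, layerAngle] using hdegenerate
  obtain ⟨l, hl⟩ := exists_layerAngle_eq_pi_of_isMaxOn hΩ hw hmax hk
  have hzero (n : Fin 3) : n ≠ l → layerAngle Ω w i n = 0 :=
    (isAngleVector_layerAngle hw i).eq_zero_of_eq_pi hl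
  fin_cases l
  · exact .inr (.inr ⟨hzero 1 (by decide), hzero 2 (by decide), hl⟩)
  · exact .inr (.inl ⟨hzero 0 (by decide), hzero 2 (by decide), hl⟩)
  · exact .inl ⟨hzero 0 (by decide), hzero 1 (by decide), hl⟩
end

section
/- Fix m ≥ 1, a nonconstant cyclic word Ω : ℤ/mℤ → Bool, and the associated angles x_i, y_i, z_i and closed polytope P̄. Let w ∈ P̄ be such that for every index j, if one of x_j, y_j, z_j equals 0 then at least two of them equal 0 (no simple degeneracies). Call layer j flat if w(j) ∈ {0, π/2}. Then for every i ∈ ℤ/mℤ, if layers i−1 and i are both flat, layer i+1 is flat as well: w(i+1) ∈ {0, π/2}. (Domino effect.) -/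
open Real

/-!
If `w i = 0`, the polytope inequalities at `i` collapse: `w (i - 1)` and `w (i + 1)` both vanish at
a nonhinge index, and agree at a hinge index. If `w i = π / 2`, then `z_i = 0`, so `x_i` or `y_i`
vanishes too; hence `w (i - 1)` and `w (i + 1)` sum to `0` or `π` at a nonhinge index, and differ by
`π / 2` at a hinge index. Two points of `[0, π / 2]` in such a position are endpoints of it.
-/

/-- Layer `i` is flat: `w i` is an endpoint of its range `[0, π / 2]`. -/
def IsFlat {m : ℕ} (w : ZMod m → ℝ) (i : ZMod m) : Prop := w i = 0 ∨ w i = π / 2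

/-- Layer `i` is not a simple degeneracy: the number of its vanishing angles is not exactly one. -/
def NoSimpleDegeneracyAt {m : ℕ} (Ω : ZMod m → Bool) (w : ZMod m → ℝ) (i : ZMod m) : Prop :=
  (xAng Ω w i = 0 ∨ yAng Ω w i = 0 ∨ zAng w i = 0) →
    (xAng Ω w i = 0 ∧ yAng Ω w i = 0) ∨ (xAng Ω w i = 0 ∧ zAng w i = 0) ∨
    (yAng Ω w i = 0 ∧ zAng w i = 0)

section

variable {m : ℕ} {Ω : ZMod m → Bool} {w : ZMod m → ℝ} {i : ZMod m}

theorem zAng_eq_zero_iff : zAng w i = 0 ↔ w i = π / 2 := by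
  unfold zAng
  constructor <;> intro h <;> linarith

theorem NoSimpleDegeneracyAt.xAng_eq_zero_or_yAng_eq_zero (h : NoSimpleDegeneracyAt Ω w i)
    (hz : zAng w i = 0) : xAng Ω w i = 0 ∨ yAng Ω w i = 0 := by
  rcases h (.inr (.inr hz)) with ⟨hx, -⟩ | ⟨hx, -⟩ | ⟨hy, -⟩
  exacts [.inl hx, .inl hx, .inr hy]

theorem xAng_eq_zero_or_yAng_eq_zero_iff_of_not_isHinge (hi : ¬IsHinge Ω i) :
    xAng Ω w i = 0 ∨ yAng Ω w i = 0 ↔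
      w (i - 1) + w (i + 1) = 0 ∨ w (i - 1) + w (i + 1) = 2 * w i := by
  have hsub : -w (i - 1) + 2 * w i - w (i + 1) = 0 ↔ w (i - 1) + w (i + 1) = 2 * w i := by
    constructor <;> intro h <;> linarith
  have hletters : Ω (i - 1) = Ω i := not_not.mp hi
  simp only [xAng, yAng, if_pos hletters]
  cases Ω i <;> simp [hsub, or_comm]

theorem xAng_eq_zero_or_yAng_eq_zero_iff_of_isHinge (hi : IsHinge Ω i) :
    xAng Ω w i = 0 ∨ yAng Ω w i = 0 ↔
      w (i + 1) = w (i - 1) + w i ∨ w (i - 1) = w (i + 1) + w i := by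
  have hnext : w (i - 1) + w i - w (i + 1) = 0 ↔ w (i + 1) = w (i - 1) + w i := by
    rw [sub_eq_zero, eq_comm]
  have hprev : -w (i - 1) + w i + w (i + 1) = 0 ↔ w (i - 1) = w (i + 1) + w i := by
    constructor <;> intro h <;> linarith
  have hletters : Ω (i - 1) ≠ Ω i := hi
  simp only [xAng, yAng, if_neg hletters]
  cases Ω (i - 1) <;> simp [hnext, hprev, or_comm]

theorem apply_add_one_eq_zero_of_not_isHinge (hw : w ∈ Pbar m Ω) (hi : ¬IsHinge Ω i)
    (h0 : w i = 0) : w (i + 1) = 0 := by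
  obtain ⟨hrange, hconcave, -⟩ := hw
  linarith [hconcave i hi, (hrange (i - 1)).1, (hrange (i + 1)).1]

theorem apply_add_one_eq_apply_sub_one_of_isHinge (hw : w ∈ Pbar m Ω) (hi : IsHinge Ω i)
    (h0 : w i = 0) : w (i + 1) = w (i - 1) := by
  obtain ⟨-, -, hhinge⟩ := hw
  have habs : |w (i + 1) - w (i - 1)| ≤ 0 := h0 ▸ hhinge i hi
  exact sub_eq_zero.mp (abs_nonpos_iff.mp habs)

theorem IsFlat.add_one_of_eq_zero (hw : w ∈ Pbar m Ω) (hprev : IsFlat w (i - 1))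
    (h0 : w i = 0) : IsFlat w (i + 1) := by
  by_cases hi : IsHinge Ω i
  · simpa only [IsFlat, apply_add_one_eq_apply_sub_one_of_isHinge hw hi h0] using hprev
  · exact .inl (apply_add_one_eq_zero_of_not_isHinge hw hi h0)

theorem isFlat_add_one_of_eq_pi_div_two (hprev : w (i - 1) ∈ Set.Icc 0 (π / 2))
    (hnext : w (i + 1) ∈ Set.Icc 0 (π / 2)) (hπ : w i = π / 2)
    (hxy : xAng Ω w i = 0 ∨ yAng Ω w i = 0) : IsFlat w (i + 1) := by
  obtain ⟨hprev_nonneg, hprev_le⟩ := hprev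
  obtain ⟨hnext_nonneg, hnext_le⟩ := hnext
  by_cases hi : IsHinge Ω i
  · rcases (xAng_eq_zero_or_yAng_eq_zero_iff_of_isHinge hi).mp hxy with hup | hdown
    · right; linarith
    · left; linarith
  · rcases (xAng_eq_zero_or_yAng_eq_zero_iff_of_not_isHinge hi).mp hxy with hmin | hmax
    · left; linarith
    · right; linarith

theorem domino_effect_general (hw : w ∈ Pbar m Ω) (hsimple : NoSimpleDegeneracyAt Ω w i)
    (hprev : IsFlat w (i - 1)) (hi : IsFlat w i) : IsFlat w (i + 1) := by
  rcases hi with h0 | hπ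
  · exact hprev.add_one_of_eq_zero hw h0
  · exact isFlat_add_one_of_eq_pi_div_two (hw.1 (i - 1)) (hw.1 (i + 1)) hπ
      (hsimple.xAng_eq_zero_or_yAng_eq_zero (zAng_eq_zero_iff.mpr hπ))

end

/-- Domino effect: for `w ∈ P̄` with no simple degeneracies (whenever an angle of a layer
vanishes, at least two of its angles vanish), if layers `i−1` and `i` are both flat
(`w ∈ {0, π/2}`), then layer `i+1` is flat as well. -/
theorem domino_effect (m : ℕ) [NeZero m] (Ω : ZMod m → Bool)
    (hΩ : ∃ i j, Ω i ≠ Ω j)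
    (w : ZMod m → ℝ) (hw : w ∈ Pbar m Ω)
    (hnosimple : ∀ j, (xAng Ω w j = 0 ∨ yAng Ω w j = 0 ∨ zAng w j = 0) →
      (xAng Ω w j = 0 ∧ yAng Ω w j = 0) ∨ (xAng Ω w j = 0 ∧ zAng w j = 0) ∨
      (yAng Ω w j = 0 ∧ zAng w j = 0)) :
    ∀ i, (w (i - 1) = 0 ∨ w (i - 1) = π / 2) → (w i = 0 ∨ w i = π / 2) →
      (w (i + 1) = 0 ∨ w (i + 1) = π / 2) := by
  intro i hprev hi
  exact domino_effect_general hw (hnosimple i) hprev hi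
end

section
/- Fix m ≥ 1, a nonconstant cyclic word Ω : ℤ/mℤ → Bool, and w : ℤ/mℤ → ℝ, with the associated angles x_i, y_i, z_i of each layer. Then all angles are positive — i.e., x_i > 0, y_i > 0 and z_i > 0 for every i ∈ ℤ/mℤ — if and only if w satisfies all three families of conditions: (range) 0 < w(i) < π/2 for all i; (concavity) w(i−1) + w(i+1) < 2·w(i) at every nonhinge index i; (hinge) |w(i+1) − w(i−1)| < w(i) at every hinge index i. -/
open Real

/-!
In every layer `x_i + y_i = 2 w_i`, so positive angles force `w > 0`. At a nonhinge index one of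
`x_i`, `y_i` is the concavity defect `2 w_i - (w_{i-1} + w_{i+1})` and the other is
`w_{i-1} + w_{i+1}`, which is positive as soon as `w > 0`. At a hinge index the two are
`w_i ± (w_{i+1} - w_{i-1})`.
-/

section Layer

variable {m : ℕ} {Ω : ZMod m → Bool} {w : ZMod m → ℝ} {i : ZMod m}

theorem zAng_pos_iff : 0 < zAng w i ↔ w i < π / 2 := by
  rw [zAng, sub_pos, lt_div_iff₀' two_pos]

theorem xAng_add_yAng (Ω : ZMod m → Bool) (w : ZMod m → ℝ) (i : ZMod m) :
    xAng Ω w i + yAng Ω w i = 2 * w i := by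
  unfold xAng yAng
  split_ifs <;> ring

theorem pos_of_xAng_pos_of_yAng_pos (hx : 0 < xAng Ω w i) (hy : 0 < yAng Ω w i) : 0 < w i := by
  linarith [xAng_add_yAng Ω w i]

theorem xAng_pos_and_yAng_pos_iff_of_not_isHinge (hi : ¬IsHinge Ω i) :
    0 < xAng Ω w i ∧ 0 < yAng Ω w i ↔
      0 < w (i - 1) + w (i + 1) ∧ w (i - 1) + w (i + 1) < 2 * w i := by
  have defect_pos_iff :
      0 < -w (i - 1) + 2 * w i - w (i + 1) ↔ w (i - 1) + w (i + 1) < 2 * w i := by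
    constructor <;> intro h <;> linarith
  have same_letter : Ω (i - 1) = Ω i := not_not.mp hi
  cases letter : Ω i
  · simp only [xAng, yAng, same_letter, letter, if_true, defect_pos_iff]
  · simp only [xAng, yAng, same_letter, letter, if_true, Bool.true_eq_false, if_false,
      defect_pos_iff, and_comm]

theorem xAng_pos_and_yAng_pos_iff_of_isHinge (hi : IsHinge Ω i) :
    0 < xAng Ω w i ∧ 0 < yAng Ω w i ↔ |w (i + 1) - w (i - 1)| < w i := by
  have sub_lt_iff : 0 < w (i - 1) + w i - w (i + 1) ↔ w (i + 1) - w (i - 1) < w i := by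
    constructor <;> intro h <;> linarith
  have neg_lt_sub_iff : 0 < -w (i - 1) + w i + w (i + 1) ↔ -w i < w (i + 1) - w (i - 1) := by
    constructor <;> intro h <;> linarith
  have letters_differ : Ω (i - 1) ≠ Ω i := hi
  simp only [xAng, yAng, if_neg letters_differ, abs_lt]
  cases Ω (i - 1)
  · simp only [if_true, sub_lt_iff, neg_lt_sub_iff, and_comm]
  · simp only [Bool.true_eq_false, if_false, sub_lt_iff, neg_lt_sub_iff]

end Layer

/-- For `m = 0` the word is bi-infinite, since `ZMod 0 = ℤ`. -/
theorem angles_positive_iff_general (m : ℕ) (Ω : ZMod m → Bool) (w : ZMod m → ℝ) :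
    (∀ i, 0 < xAng Ω w i ∧ 0 < yAng Ω w i ∧ 0 < zAng w i) ↔
      ((∀ i, 0 < w i ∧ w i < π / 2) ∧
       (∀ i, ¬IsHinge Ω i → w (i - 1) + w (i + 1) < 2 * w i) ∧
       (∀ i, IsHinge Ω i → |w (i + 1) - w (i - 1)| < w i)) := by
  simp only [← and_assoc (a := 0 < xAng _ _ _), zAng_pos_iff]
  constructor
  · intro angles
    exact ⟨fun i ↦ ⟨pos_of_xAng_pos_of_yAng_pos (angles i).1.1 (angles i).1.2, (angles i).2⟩,
      fun i hi ↦ ((xAng_pos_and_yAng_pos_iff_of_not_isHinge hi).mp (angles i).1).2,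
      fun i hi ↦ (xAng_pos_and_yAng_pos_iff_of_isHinge hi).mp (angles i).1⟩
  · rintro ⟨range, concavity, hinge⟩ i
    refine ⟨?_, (range i).2⟩
    by_cases hi : IsHinge Ω i
    · exact (xAng_pos_and_yAng_pos_iff_of_isHinge hi).mpr (hinge i hi)
    · have neighbours_pos : 0 < w (i - 1) + w (i + 1) :=
        add_pos (range (i - 1)).1 (range (i + 1)).1
      exact (xAng_pos_and_yAng_pos_iff_of_not_isHinge hi).mpr ⟨neighbours_pos, concavity i hi⟩

/-- All angles of all layers are positive if and only if the parameters `w` satisfy the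
range, concavity and hinge conditions (with strict inequalities). -/
theorem angles_positive_iff (m : ℕ) [NeZero m] (Ω : ZMod m → Bool)
    (hΩ : ∃ i j, Ω i ≠ Ω j) (w : ZMod m → ℝ) :
    (∀ i, 0 < xAng Ω w i ∧ 0 < yAng Ω w i ∧ 0 < zAng w i) ↔
      ((∀ i, 0 < w i ∧ w i < π / 2) ∧
       (∀ i, ¬IsHinge Ω i → w (i - 1) + w (i + 1) < 2 * w i) ∧
       (∀ i, IsHinge Ω i → |w (i + 1) - w (i - 1)| < w i)) :=
  angles_positive_iff_general m Ω w
end
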